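/- The SUSY operator intertwines the transfer matrices of adjacent lengths up to the factor d(u)²: for every N ≥ 2 and every u ∈ ℂ, Q^(N) ∘ t^(N)(u) = d(u)² · t^(N−1)(u) ∘ Q^(N) as linear maps V^⊗N → V^⊗(N−1). -/

import Mathlib

noncomputable section
open Complex Matrix

/-- Spin configurations of a chain of `N` sites: `true` encodes `v₊`, `false` encodes `v₋`.
The site with label `i ∈ {1,…,N}` corresponds to the index `i-1 : Fin N`
(so the leftmost site `N` is the index `N-1`). -/
abbrev Conf (N : ℕ) := Fin N → Bool

/-- The combinatorial-point parameter `η = 2πi/3`. -/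
def ηc : ℂ := 2 * (Real.pi : ℂ) * Complex.I / 3

/-- `a(u) = sinh(u+η)/sinh η`. -/
def aF (u : ℂ) : ℂ := Complex.sinh (u + ηc) / Complex.sinh ηc
/-- `b(u) = sinh(u)/sinh η`. -/
def bF (u : ℂ) : ℂ := Complex.sinh u / Complex.sinh ηc
/-- `c(u) = 1`. -/
def cF (_ : ℂ) : ℂ := 1
/-- `d(u) = sinh(u-η)/sinh η`. -/
def dF (u : ℂ) : ℂ := Complex.sinh (u - ηc) / Complex.sinh ηc
/-- The R-matrix `R(u)` on `V⊗V` in the ordered basis `(v₊⊗v₊, v₊⊗v₋, v₋⊗v₊, v₋⊗v₋)`: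
`[[a,0,0,0],[0,b,c,0],[0,c,b,0],[0,0,0,a]]`. -/
def Rm (u : ℂ) : Matrix (Bool × Bool) (Bool × Bool) ℂ :=
  Matrix.of fun o i =>
    if o = i then (if o.1 = o.2 then aF u else bF u)
    else if o.1 = i.2 ∧ o.2 = i.1 ∧ o.1 ≠ o.2 then cF u
    else 0

/-- The boundary K-matrix `K⁻(u) = diag(d(u), -a(u))` in the basis `(v₊, v₋)`. -/
def Km (u : ℂ) : Matrix Bool Bool ℂ :=
  Matrix.of fun o i => if o = i then (if o then dF u else -aF u) else 0

/-- `R₀ᵢ(u)`: the matrix `R(u)` applied to `V₀ ⊗ Vᵢ` (auxiliary space first), identity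
elsewhere, on `V₀ ⊗ V^⊗N`; here the site with label `i` is the index `i-1`. -/
def R0i (N : ℕ) (u : ℂ) (i : Fin N) :
    Matrix (Bool × Conf N) (Bool × Conf N) ℂ :=
  Matrix.of fun x y =>
    if ∀ j, j ≠ i → x.2 j = y.2 j then Rm u (x.1, x.2 i) (y.1, y.2 i) else 0

/-- `Rᵢ₀(u)`: the matrix `R(u)` applied to `Vᵢ ⊗ V₀` (auxiliary space second), identity
elsewhere, on `V₀ ⊗ V^⊗N`. -/
def Ri0 (N : ℕ) (u : ℂ) (i : Fin N) :
    Matrix (Bool × Conf N) (Bool × Conf N) ℂ :=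
  Matrix.of fun x y =>
    if ∀ j, j ≠ i → x.2 j = y.2 j then Rm u (x.2 i, x.1) (y.2 i, y.1) else 0

/-- `T^(N)(u) = R₀₁(u) R₀₂(u) ⋯ R₀N(u)`. -/
def Tmono (N : ℕ) (u : ℂ) : Matrix (Bool × Conf N) (Bool × Conf N) ℂ :=
  (List.ofFn fun i : Fin N => R0i N u i).prod

/-- `T̄^(N)(u) = R_{N0}(u) ⋯ R_{20}(u) R_{10}(u)`. -/
def Tbar (N : ℕ) (u : ℂ) : Matrix (Bool × Conf N) (Bool × Conf N) ℂ :=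
  (List.ofFn fun i : Fin N => Ri0 N u i).reverse.prod

/-- `K₀⁻(u)`: the matrix `K⁻(u)` acting on the auxiliary space `V₀`, identity on `V^⊗N`. -/
def K0m (N : ℕ) (u : ℂ) : Matrix (Bool × Conf N) (Bool × Conf N) ℂ :=
  Matrix.of fun x y => if x.2 = y.2 then Km u x.1 y.1 else 0

/-- The double-row monodromy matrix `U^(N)(u) = T̄^(N)(u) K₀⁻(u) T^(N)(u)`. -/
def Umono (N : ℕ) (u : ℂ) : Matrix (Bool × Conf N) (Bool × Conf N) ℂ :=
  Tbar N u * K0m N u * Tmono N u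

/-- `𝒜^(N)(u)`: the `(v₊, v₊)` auxiliary-space block of `U^(N)(u)`. -/
def Aop (N : ℕ) (u : ℂ) : Matrix (Conf N) (Conf N) ℂ :=
  Matrix.of fun s t => Umono N u (true, s) (true, t)
/-- `ℬ^(N)(u)`: the `(v₊, v₋)` auxiliary-space block of `U^(N)(u)`. -/
def Bop (N : ℕ) (u : ℂ) : Matrix (Conf N) (Conf N) ℂ :=
  Matrix.of fun s t => Umono N u (true, s) (false, t)
/-- `𝒞^(N)(u)`: the `(v₋, v₊)` auxiliary-space block of `U^(N)(u)`. -/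
def Cop (N : ℕ) (u : ℂ) : Matrix (Conf N) (Conf N) ℂ :=
  Matrix.of fun s t => Umono N u (false, s) (true, t)
/-- `𝒟^(N)(u)`: the `(v₋, v₋)` auxiliary-space block of `U^(N)(u)`. -/
def Dop (N : ℕ) (u : ℂ) : Matrix (Conf N) (Conf N) ℂ :=
  Matrix.of fun s t => Umono N u (false, s) (false, t)

/-- The transfer matrix
`t^(N)(u) = (sinh u / sinh η) 𝒜^(N)(u) - (sinh(u+2η)/sinh η) 𝒟^(N)(u)`. -/
def tOp (N : ℕ) (u : ℂ) : Matrix (Conf N) (Conf N) ℂ :=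
  (Complex.sinh u / Complex.sinh ηc) • Aop N u
    - (Complex.sinh (u + 2 * ηc) / Complex.sinh ηc) • Dop N u

/-- The pseudovacuum `Ω^(N) = v₊ ⊗ ⋯ ⊗ v₊`. -/
def Omega (N : ℕ) : Conf N → ℂ := fun s => if ∀ j, s j = true then 1 else 0

/-- `E^ε ⊗ X : V^⊗(n+2) → V^⊗(n+1)`: the linear functional `E^ε : V → ℂ`, `v_ε ↦ 1`
(zero on the other basis vector), applied to the leftmost site `N = n+2`, tensored with
the operator `X` on the remaining sites `n+1,…,1`.  Here `e = true` encodes `ε = +`. -/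
def Etens (n : ℕ) (e : Bool) (X : Matrix (Conf (n + 1)) (Conf (n + 1)) ℂ) :
    Matrix (Conf (n + 1)) (Conf (n + 2)) ℂ :=
  Matrix.of fun o i =>
    (if i (Fin.last (n + 1)) = e then 1 else 0) * X o (fun j => i (Fin.castSucc j))

/-- `F ⊗ X` : the one-site operator `F` applied to the leftmost site `N+1` of a chain of
`N+1` sites, tensored with the operator `X` on the remaining sites `N,…,1`. -/
def siteTens (N : ℕ) (F : Matrix Bool Bool ℂ) (X : Matrix (Conf N) (Conf N) ℂ) :
    Matrix (Conf (N + 1)) (Conf (N + 1)) ℂ :=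
  Matrix.of fun o i =>
    F (o (Fin.last N)) (i (Fin.last N)) * X (fun j => o (Fin.castSucc j)) (fun j => i (Fin.castSucc j))

/-- `E^ε_{ε'} : V → V` sends `v_ε ↦ v_{ε'}` and the other basis vector to `0`
(`true` encodes `+`). -/
def Eop (e e' : Bool) : Matrix Bool Bool ℂ :=
  Matrix.of fun o i => if i = e ∧ o = e' then 1 else 0
/-- The local SUSY generator `q_{i,i+1}` (with `i = k+1`) on a chain of `n+2` sites:
it applies `q : V⊗V → V`, `q(v₊⊗v₊) = v₋` (zero on the other basis vectors), to the
adjacent sites `i, i+1` (merging them into the single site `i` of the output chain of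
`n+1` sites) and the identity to all other sites. -/
def qMerge (n : ℕ) (k : Fin (n + 1)) : Matrix (Conf (n + 1)) (Conf (n + 2)) ℂ :=
  Matrix.of fun o i =>
    if i (Fin.castSucc k) = true ∧ i (Fin.succ k) = true ∧ o k = false ∧
        (∀ j : Fin (n + 1),
          ((j : ℕ) < (k : ℕ) → o j = i (Fin.castSucc j)) ∧
          ((k : ℕ) < (j : ℕ) → o j = i (Fin.succ j)))
    then 1 else 0

/-- The SUSY operator `Q^(N)` for `N = n+2`:
`Q^(N) = ∑_{i=1}^{N-1} (-1)^{i+1} q_{i,i+1} : V^⊗N → V^⊗(N-1)`. -/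
def Qop (n : ℕ) : Matrix (Conf (n + 1)) (Conf (n + 2)) ℂ :=
  ∑ k : Fin (n + 1), ((-1 : ℂ) ^ (k : ℕ)) • qMerge n k

/-- The local operator `q†_i` (with `i = k+1`) on a chain of `n+1` sites: it applies
`q† : V → V⊗V`, `q†(v₋) = v₊⊗v₊`, `q†(v₊) = 0`, to site `i` (splitting it into the two
adjacent sites `i, i+1` of the output chain of `n+2` sites) and the identity elsewhere. -/
def qSplit (n : ℕ) (k : Fin (n + 1)) : Matrix (Conf (n + 2)) (Conf (n + 1)) ℂ :=
  Matrix.of fun o i =>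
    if o (Fin.castSucc k) = true ∧ o (Fin.succ k) = true ∧ i k = false ∧
        (∀ j : Fin (n + 1),
          ((j : ℕ) < (k : ℕ) → i j = o (Fin.castSucc j)) ∧
          ((k : ℕ) < (j : ℕ) → i j = o (Fin.succ j)))
    then 1 else 0

/-- The adjoint SUSY operator `Q^(N)†` for `N = n+2`:
`Q^(N)† = ∑_{i=1}^{N-1} (-1)^{i+1} q†_i : V^⊗(N-1) → V^⊗N`. -/
def Qdag (n : ℕ) : Matrix (Conf (n + 2)) (Conf (n + 1)) ℂ :=
  ∑ k : Fin (n + 1), ((-1 : ℂ) ^ (k : ℕ)) • qSplit n k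


/-- Append a spin at the leftmost site. -/
abbrev sn {N : ℕ} (s : Conf N) (b : Bool) : Conf (N + 1) := Fin.snoc (α := fun _ => Bool) s b

theorem sn_inj {N : ℕ} (s t : Conf N) (b c : Bool) : sn s b = sn t c ↔ s = t ∧ b = c := by
  exact Fin.snoc_inj

theorem exists_sn {N : ℕ} (s : Conf (N + 1)) : ∃ t b, s = sn t b :=
  ⟨Fin.init s, s (Fin.last N), (Fin.snoc_init_self s).symm⟩

theorem sum_sn {N : ℕ} (f : Conf (N + 1) → ℂ) : ∑ s, f s = ∑ b, ∑ s, f (sn s b) := by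
  rw [← (Fin.snocEquiv (fun _ : Fin (N + 1) => Bool)).sum_comp, Fintype.sum_prod_type]
  rfl

/-- Extend an operator by the identity on a new leftmost site. -/
def lft {N : ℕ} (M : Matrix (Bool × Conf N) (Bool × Conf N) ℂ) :
    Matrix (Bool × Conf (N + 1)) (Bool × Conf (N + 1)) ℂ :=
  Matrix.of fun x y => if x.2 (Fin.last N) = y.2 (Fin.last N)
    then M (x.1, Fin.init x.2) (y.1, Fin.init y.2) else 0

theorem lft_sn {N : ℕ} (M : Matrix (Bool × Conf N) (Bool × Conf N) ℂ) (α β : Bool)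
    (s t : Conf N) (b c : Bool) :
    lft M (α, sn s b) (β, sn t c) = if b = c then M (α, s) (β, t) else 0 := by
  simp [lft, sn]

theorem lft_mul {N : ℕ} (M M' : Matrix (Bool × Conf N) (Bool × Conf N) ℂ) :
    lft (M * M') = lft M * lft M' := by
  ext ⟨α, s⟩ ⟨β, t⟩
  obtain ⟨s, b, rfl⟩ := exists_sn s
  obtain ⟨t, c, rfl⟩ := exists_sn t
  simp only [lft_sn, Matrix.mul_apply, Fintype.sum_prod_type, sum_sn]
  cases b <;> cases c <;> simp

theorem lft_one {N : ℕ} :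
    lft (1 : Matrix (Bool × Conf N) (Bool × Conf N) ℂ) = 1 := by
  ext ⟨α, s⟩ ⟨β, t⟩
  obtain ⟨s, b, rfl⟩ := exists_sn s
  obtain ⟨t, c, rfl⟩ := exists_sn t
  simp only [lft_sn, Matrix.one_apply, Prod.mk.injEq, sn_inj]
  by_cases h1 : b = c <;> simp [h1]

theorem lft_prod {N : ℕ} (l : List (Matrix (Bool × Conf N) (Bool × Conf N) ℂ)) :
    lft l.prod = (l.map lft).prod := by
  induction l with
  | nil => simp [lft_one]
  | cons a l ih => simp [lft_mul, ih]

theorem cond_sn {N : ℕ} (i : Fin N) (s t : Conf N) (b c : Bool) :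
    (∀ j, j ≠ i.castSucc → sn s b j = sn t c j) ↔ (b = c ∧ ∀ j, j ≠ i → s j = t j) := by
  constructor
  · intro h
    refine ⟨by simpa [sn] using h (Fin.last N) (Fin.castSucc_lt_last i).ne', fun j hj => ?_⟩
    simpa [sn] using h j.castSucc (by simpa using hj)
  · rintro ⟨h1, h2⟩ j hj
    induction j using Fin.lastCases with
    | last => simpa [sn] using h1
    | cast j => simpa [sn] using h2 j (by simpa using hj)

theorem cond_sn_last {N : ℕ} (s t : Conf N) (b c : Bool) :
    (∀ j, j ≠ Fin.last N → sn s b j = sn t c j) ↔ s = t := by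
  constructor
  · intro h
    funext j
    simpa [sn] using h j.castSucc (Fin.castSucc_lt_last j).ne
  · rintro rfl j hj
    induction j using Fin.lastCases with
    | last => exact absurd rfl hj
    | cast j => simp [sn]

theorem R0i_cast {N : ℕ} (u : ℂ) (i : Fin N) : R0i (N + 1) u i.castSucc = lft (R0i N u i) := by
  ext ⟨α, s⟩ ⟨β, t⟩
  obtain ⟨s, b, rfl⟩ := exists_sn s
  obtain ⟨t, c, rfl⟩ := exists_sn t
  rw [lft_sn]
  simp only [R0i, Matrix.of_apply, cond_sn]
  by_cases h1 : b = c <;> simp [h1, sn]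

theorem Ri0_cast {N : ℕ} (u : ℂ) (i : Fin N) : Ri0 (N + 1) u i.castSucc = lft (Ri0 N u i) := by
  ext ⟨α, s⟩ ⟨β, t⟩
  obtain ⟨s, b, rfl⟩ := exists_sn s
  obtain ⟨t, c, rfl⟩ := exists_sn t
  rw [lft_sn]
  simp only [Ri0, Matrix.of_apply, cond_sn]
  by_cases h1 : b = c <;> simp [h1, sn]

theorem R0i_last {N : ℕ} (u : ℂ) (α β : Bool) (s t : Conf N) (b c : Bool) :
    R0i (N + 1) u (Fin.last N) (α, sn s b) (β, sn t c) =
      if s = t then Rm u (α, b) (β, c) else 0 := by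
  simp only [R0i, Matrix.of_apply, cond_sn_last]
  simp [sn]

theorem Ri0_last {N : ℕ} (u : ℂ) (α β : Bool) (s t : Conf N) (b c : Bool) :
    Ri0 (N + 1) u (Fin.last N) (α, sn s b) (β, sn t c) =
      if s = t then Rm u (b, α) (c, β) else 0 := by
  simp only [Ri0, Matrix.of_apply, cond_sn_last]
  simp [sn]

theorem K0m_succ {N : ℕ} (u : ℂ) : K0m (N + 1) u = lft (K0m N u) := by
  ext ⟨α, s⟩ ⟨β, t⟩
  obtain ⟨s, b, rfl⟩ := exists_sn s
  obtain ⟨t, c, rfl⟩ := exists_sn t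
  rw [lft_sn]
  simp only [K0m, Matrix.of_apply, sn_inj]
  by_cases h1 : b = c <;> simp [h1]

theorem Umono_succ (N : ℕ) (u : ℂ) :
    Umono (N + 1) u =
      Ri0 (N + 1) u (Fin.last N) * lft (Umono N u) * R0i (N + 1) u (Fin.last N) := by
  have h1 : Tmono (N + 1) u = lft (Tmono N u) * R0i (N + 1) u (Fin.last N) := by
    simp only [Tmono, List.ofFn_succ', List.concat_eq_append, List.prod_append, lft_prod,
      List.map_ofFn, List.prod_singleton]
    congr 3
    funext i
    exact R0i_cast u i
  have h2 : Tbar (N + 1) u = Ri0 (N + 1) u (Fin.last N) * lft (Tbar N u) := by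
    simp only [Tbar, List.ofFn_succ', List.concat_eq_append, List.reverse_append,
      List.reverse_singleton, List.prod_append, lft_prod, List.map_reverse,
      List.map_ofFn, List.prod_singleton]
    congr 4
    funext i
    exact Ri0_cast u i
  rw [Umono, Umono, h1, h2, lft_mul, lft_mul, K0m_succ]
  simp only [Matrix.mul_assoc]

/-- The local double-row weights. -/
def Fw (u : ℂ) (α β γ δ o s : Bool) : ℂ :=
  ∑ t, Rm u (o, α) (t, γ) * Rm u (δ, t) (β, s)

theorem Umono_sn (N : ℕ) (u : ℂ) (α β : Bool) (s t : Conf N) (b c : Bool) :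
    Umono (N + 1) u (α, sn s b) (β, sn t c) =
      ∑ γ, ∑ δ, Fw u α β γ δ b c * Umono N u (γ, s) (δ, t) := by
  rw [Umono_succ]
  simp only [Matrix.mul_apply, Fintype.sum_prod_type, sum_sn, lft_sn, Ri0_last, R0i_last, Fw]
  simp
  ring

/-- Coefficients of the boundary term. -/
def kw (u : ℂ) : Bool → Bool → Bool → Bool → Bool → ℂ
  | true, true, true, false, true => dF u
  | false, true, true, true, true => aF u
  | false, true, true, false, false => 1
  | false, true, false, false, true => dF u
  | false, false, true, false, true => bF u
  | _, _, _, _, _ => 0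

theorem cosh_eta : Complex.cosh ηc = -1 / 2 := by
  have h : ηc = ((2 * Real.pi / 3 : ℝ) : ℂ) * Complex.I := by
    simp only [ηc]; push_cast; ring
  have h2 : Real.cos (2 * Real.pi / 3) = -1 / 2 := by
    rw [show 2 * Real.pi / 3 = Real.pi - Real.pi / 3 by ring, Real.cos_pi_sub,
      Real.cos_pi_div_three]
    norm_num
  rw [h, Complex.cosh_mul_I, ← Complex.ofReal_cos, h2]
  push_cast
  ring

theorem sinh_eta_sq : Complex.sinh ηc ^ 2 = -3 / 4 := by
  rw [Complex.sinh_sq, cosh_eta]; norm_num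

theorem sinh_eta_ne : Complex.sinh ηc ≠ 0 := by
  intro h
  have := sinh_eta_sq
  rw [h] at this
  norm_num at this

theorem abd (u : ℂ) : dF u = - aF u - bF u := by
  have := sinh_eta_ne
  simp only [dF, aF, bF, Complex.sinh_add, Complex.sinh_sub, cosh_eta]
  field_simp
  ring

theorem quad (u : ℂ) : aF u ^ 2 + aF u * bF u + bF u ^ 2 = 1 := by
  have := sinh_eta_ne
  have h1 := sinh_eta_sq
  have h2 := Complex.cosh_sq u
  simp only [aF, bF, Complex.sinh_add, cosh_eta]
  field_simp
  linear_combination Complex.sinh ηc ^ 2 * 4 * h2 + 4 * Complex.sinh u ^ 2 * h1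

theorem d_eq (u : ℂ) : Complex.sinh (u + 2 * ηc) / Complex.sinh ηc = dF u := by
  simp only [dF, Complex.sinh_add, Complex.sinh_sub, Complex.cosh_two_mul, Complex.sinh_two_mul,
    cosh_eta, sinh_eta_sq]
  ring

/-- Entries of the R-matrix as a table. -/
def Rw (a b : ℂ) : Bool → Bool → Bool → Bool → ℂ
  | true, true, true, true => a
  | false, false, false, false => a
  | true, false, true, false => b
  | false, true, false, true => b
  | true, false, false, true => 1
  | false, true, true, false => 1
  | _, _, _, _ => 0

theorem Rm_eq (u : ℂ) (p q r s : Bool) : Rm u (p, q) (r, s) = Rw (aF u) (bF u) p q r s := by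
  cases p <;> cases q <;> cases r <;> cases s <;> simp [Rm, Rw, cF]

def qw (o s1 s2 : Bool) : ℂ := if s1 = true ∧ s2 = true ∧ o = false then 1 else 0

theorem local_id (u : ℂ) (α β κ l o s1 s2 : Bool) :
    (∑ γ, ∑ δ, Fw u α β γ δ o s1 * kw u γ δ κ l s2)
      + (∑ γ, ∑ δ, kw u α β γ δ s1 * Fw u γ δ κ l o s2)
      + dF u ^ 2 * (Fw u α β κ l o false * qw false s1 s2)
      - (if o = false then ∑ γ, ∑ δ, Fw u α β γ δ true s1 * Fw u γ δ κ l true s2 else 0) = 0 := by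
  have h1 := abd u
  have h2 := quad u
  simp only [Fw, Rm_eq, Fintype.sum_bool, qw]
  cases α <;> cases β <;> cases κ <;> cases l <;> cases o <;> cases s1 <;> cases s2 <;>
    simp only [kw, Rw, h1, mul_zero, zero_mul, add_zero, zero_add, sub_zero, mul_one, one_mul,
      if_true, if_false, and_self, and_true, true_and, and_false, false_and, reduceCtorEq] <;>
    generalize aF u = a at * <;> generalize bF u = b at * <;> clear h1 <;> grind

/-- The SUSY operator, including length 1. -/
def Qx : (m : ℕ) → Matrix (Conf m) (Conf (m + 1)) ℂ
  | 0 => 0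
  | n + 1 => Qop n

theorem qMerge_cast (n : ℕ) (k : Fin (n + 1)) (o : Conf (n + 1)) (i : Conf (n + 2)) (ob s : Bool) :
    qMerge (n + 1) k.castSucc (sn o ob) (sn i s) = if ob = s then qMerge n k o i else 0 := by
  simp only [qMerge, Matrix.of_apply]
  rw [← ite_and]
  congr 1
  rw [Fin.forall_fin_succ' (n := n + 1)]
  simp only [sn, ← Fin.castSucc_succ, Fin.snoc_castSucc, Fin.succ_last, Fin.snoc_last]
  simp only [Fin.val_castSucc, Fin.val_last, eq_iff_iff]
  have : (k : ℕ) < n + 1 := k.2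
  constructor
  · rintro ⟨a, b, c, d, e⟩; exact ⟨e.2 this, a, b, c, d⟩
  · rintro ⟨e, a, b, c, d⟩; exact ⟨a, b, c, d, fun h => by omega, fun _ => e⟩

theorem qMerge_last (m : ℕ) (o i : Conf m) (ob s1 s2 : Bool) :
    qMerge m (Fin.last m) (sn o ob) (sn (sn i s2) s1) = if o = i then qw ob s1 s2 else 0 := by
  simp only [qMerge, Matrix.of_apply, qw]
  rw [← ite_and]
  congr 1
  rw [Fin.forall_fin_succ' (n := m)]
  simp only [sn, ← Fin.castSucc_succ, Fin.snoc_castSucc, Fin.succ_last, Fin.snoc_last]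
  simp only [Fin.val_castSucc, Fin.val_last, eq_iff_iff, funext_iff]
  constructor
  · rintro ⟨a, b, c, d, e⟩; exact ⟨fun j => (d j).1 j.2, b, a, c⟩
  · rintro ⟨e, a, b, c⟩
    exact ⟨b, a, c, fun j => ⟨fun _ => e j, fun h => by omega⟩, fun h => by omega, fun h => by omega⟩

theorem Qx_sn (m : ℕ) (o i : Conf m) (ob s1 s2 : Bool) :
    Qx (m + 1) (sn o ob) (sn (sn i s2) s1) =
      (if ob = s1 then Qx m o (sn i s2) else 0)
        + (-1) ^ m * (if o = i then qw ob s1 s2 else 0) := by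
  rw [← qMerge_last]
  rw [show Qx (m + 1) = Qop m from rfl, Qop, Matrix.sum_apply, Fin.sum_univ_castSucc]
  simp only [Matrix.smul_apply, smul_eq_mul, Fin.val_castSucc, Fin.val_last]
  congr 1
  cases m with
  | zero => simp [Qx]
  | succ n =>
    simp only [Qx, Qop, Matrix.sum_apply, Matrix.smul_apply, smul_eq_mul, qMerge_cast]
    split_ifs <;> simp

theorem Qx_sn' (m : ℕ) (o : Conf m) (r : Conf (m + 1)) (ob s : Bool) :
    Qx (m + 1) (sn o ob) (sn r s) =
      (if ob = s then Qx m o r else 0)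
        + (-1) ^ m * (if r = sn o true then qw ob s true else 0) := by
  obtain ⟨i, s2, rfl⟩ := exists_sn r
  rw [Qx_sn]
  simp only [sn_inj]
  congr 2
  by_cases h : o = i
  · subst h
    cases s2 <;> simp [qw]
  · simp [h, Ne.symm h]

theorem base_id (u : ℂ) (α β s : Bool) (o i : Conf 0) :
    ∑ γ, ∑ δ, kw u α β γ δ s * Umono 0 u (γ, o) (δ, i) = 0 := by
  have h : ∀ γ δ, Umono 0 u (γ, o) (δ, i) = Km u γ δ := by
    intro γ δ
    simp [Umono, Tbar, Tmono, K0m, Subsingleton.elim o i]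
  simp only [h]
  revert α β s
  simp [kw, Km, Bool.forall_bool]
  ring

theorem main_id (u : ℂ) (m : ℕ) : ∀ (α β : Bool) (o i : Conf m) (s : Bool),
    ∑ r, Qx m o r * Umono (m + 1) u (α, r) (β, sn i s) =
      dF u ^ 2 * ∑ r, Umono m u (α, o) (β, r) * Qx m r (sn i s)
        - (-1) ^ m * ∑ γ, ∑ δ, kw u α β γ δ s * Umono m u (γ, o) (δ, i) := by
  induction m with
  | zero =>
    intro α β o i s
    rw [base_id]
    simp [Qx]
  | succ m ih =>
    intro α β o i s1
    obtain ⟨o, ob, rfl⟩ := exists_sn o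
    obtain ⟨i, s2, rfl⟩ := exists_sn i
    have hL : ∑ r, Qx (m + 1) (sn o ob) r * Umono (m + 2) u (α, r) (β, sn (sn i s2) s1) =
        (∑ γ, ∑ δ, Fw u α β γ δ ob s1 *
          ∑ r, Qx m o r * Umono (m + 1) u (γ, r) (δ, sn i s2)) +
        (-1) ^ m * ∑ κ, ∑ l, (if ob = false then ∑ γ, ∑ δ, Fw u α β γ δ true s1 *
          Fw u γ δ κ l true s2 else 0) * Umono m u (κ, o) (l, i) := by
      rw [sum_sn]
      simp only [Qx_sn', Umono_sn (m + 1)]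
      simp only [add_mul, Finset.sum_add_distrib, mul_assoc, ite_mul, mul_ite, zero_mul, mul_zero,
        Finset.sum_ite_eq', Finset.mem_univ, if_true, Umono_sn m, Fintype.sum_bool,
        Finset.mul_sum]
      congr 1
      · cases ob <;> simp [mul_add, Finset.sum_add_distrib, mul_left_comm]
      · cases ob <;> simp [qw] <;> ring
    have hR : ∑ r, Umono (m + 1) u (α, sn o ob) (β, r) * Qx (m + 1) r (sn (sn i s2) s1) =
        (∑ γ, ∑ δ, Fw u α β γ δ ob s1 *
          ∑ r, Umono m u (γ, o) (δ, r) * Qx m r (sn i s2)) +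
        (-1) ^ m * ∑ κ, ∑ l, Fw u α β κ l ob false * qw false s1 s2 * Umono m u (κ, o) (l, i) := by
      rw [sum_sn]
      simp only [Qx_sn, Umono_sn m]
      simp only [mul_add, Finset.sum_add_distrib, ite_mul, mul_ite, zero_mul, mul_zero,
        Finset.sum_ite_eq', Finset.mem_univ, if_true, Fintype.sum_bool,
        Finset.mul_sum]
      congr 1
      · cases s1 <;> simp [add_mul, Finset.sum_add_distrib, mul_assoc]
      · cases s1 <;> cases s2 <;> simp [qw] <;> ring
    have hk : ∑ γ, ∑ δ, kw u α β γ δ s1 * Umono (m + 1) u (γ, sn o ob) (δ, sn i s2) =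
        ∑ κ, ∑ l, (∑ γ, ∑ δ, kw u α β γ δ s1 * Fw u γ δ κ l ob s2) * Umono m u (κ, o) (l, i) := by
      simp only [Umono_sn, Fintype.sum_bool]
      ring
    rw [hL, hR, hk]
    simp only [ih]
    have hloc := fun κ l => local_id u α β κ l ob s1 s2
    have h00 := hloc false false
    have h01 := hloc false true
    have h10 := hloc true false
    have h11 := hloc true true
    clear hloc hL hR hk ih
    simp only [Fintype.sum_bool] at h00 h01 h10 h11 ⊢
    rw [pow_succ]
    linear_combination (-(-1) ^ m) * (h00 * Umono m u (false, o) (false, i)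
      + h01 * Umono m u (false, o) (true, i) + h10 * Umono m u (true, o) (false, i)
      + h11 * Umono m u (true, o) (true, i))

theorem Qop_mul_block (n : ℕ) (u : ℂ) (α β : Bool) (o : Conf (n + 1)) (i : Conf (n + 1)) (s : Bool) :
    ∑ r, Qop n o r * Umono (n + 2) u (α, r) (β, sn i s) =
      dF u ^ 2 * ∑ r, Umono (n + 1) u (α, o) (β, r) * Qop n r (sn i s)
        - (-1) ^ (n + 1) * ∑ γ, ∑ δ, kw u α β γ δ s * Umono (n + 1) u (γ, o) (δ, i) :=
  main_id u (n + 1) α β o i s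

/-- for every `N = n+2 ≥ 2` and every `u ∈ ℂ`,
`Q^(N) ∘ t^(N)(u) = d(u)² t^(N-1)(u) ∘ Q^(N)` (`Qop n = Q^(n+2)`). -/
theorem Q_transfer_matrix (n : ℕ) (u : ℂ) :
    Qop n * tOp (n + 2) u = dF u ^ 2 • (tOp (n + 1) u * Qop n) := by
  ext o i
  obtain ⟨i, s, rfl⟩ := exists_sn i
  have hA : (Qop n * Aop (n + 2) u) o (sn i s) = _ := Qop_mul_block n u true true o i s
  have hD : (Qop n * Dop (n + 2) u) o (sn i s) = _ := Qop_mul_block n u false false o i s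
  have hA' : ∑ r, Umono (n + 1) u (true, o) (true, r) * Qop n r (sn i s) =
    (Aop (n + 1) u * Qop n) o (sn i s) := rfl
  have hD' : ∑ r, Umono (n + 1) u (false, o) (false, r) * Qop n r (sn i s) =
    (Dop (n + 1) u * Qop n) o (sn i s) := rfl
  rw [hA'] at hA
  rw [hD'] at hD
  simp only [tOp, d_eq, Matrix.mul_sub, Matrix.mul_smul, Matrix.sub_mul, Matrix.smul_mul,
    Matrix.sub_apply, Matrix.smul_apply, smul_eq_mul, hA, hD]
  have hb : Complex.sinh u / Complex.sinh ηc = bF u := rfl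
  rw [hb]
  cases s <;> simp [kw] <;> ring
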